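/- Let U_p, U_f, Y_p, Y_f be the block partition of a matrix H whose column space equals the subspace B of length-L trajectories of an LTI system, with L = T_ini + T_f. If the map sending a column index to its (past input, future input, past output) block is injective on the behavior (i.e., the stacked matrix [U_p; U_f; Y_p] has the same rank as H), then the subspace predictor Y_f [U_p; U_f; Y_p]^† z reproduces the true future output: for any trajectory (u_p, u_f, y_p, y_f) of the system, Y_f [U_p; U_f; Y_p]^† (u_p, u_f, y_p) = y_f. -/

import Mathlib

open Matrix

/-- `G⁺` is the Moore–Penrose pseudoinverse of `G`, characterized by the four Penrose
conditions. -/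
def IsMoorePenrose {α β : Type*} [Fintype α] [Fintype β]
    (G : Matrix α β ℝ) (Gd : Matrix β α ℝ) : Prop :=
  G * Gd * G = G ∧ Gd * G * Gd = Gd ∧ (G * Gd)ᵀ = G * Gd ∧ (Gd * G)ᵀ = Gd * G

/-- let `H = [U_p; U_f; Y_p; Y_f]` be a block matrix whose column space is
the trajectory subspace `B`, and suppose `rank [U_p; U_f; Y_p] = rank H` (so future
outputs are determined by past data and future inputs along `B`).  Then the subspace
predictor reproduces the true future output: for every trajectory
`(u_p, u_f, y_p, y_f)` in the column space of `H`,
`Y_f [U_p; U_f; Y_p]⁺ (u_p, u_f, y_p) = y_f`. -/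
theorem subspace_predictor_exact (a b c e N : ℕ)
    (Up : Matrix (Fin a) (Fin N) ℝ) (Uf : Matrix (Fin b) (Fin N) ℝ)
    (Yp : Matrix (Fin c) (Fin N) ℝ) (Yf : Matrix (Fin e) (Fin N) ℝ)
    (G : Matrix (Fin a ⊕ Fin b ⊕ Fin c) (Fin N) ℝ)
    (hG : G = Matrix.of fun i j =>
      Sum.elim (fun i => Up i j) (Sum.elim (fun i => Uf i j) (fun i => Yp i j)) i)
    (H : Matrix ((Fin a ⊕ Fin b ⊕ Fin c) ⊕ Fin e) (Fin N) ℝ)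
    (hH : H = Matrix.of fun i j => Sum.elim (fun i => G i j) (fun i => Yf i j) i)
    (hrank : G.rank = H.rank)
    (Gd : Matrix (Fin N) (Fin a ⊕ Fin b ⊕ Fin c) ℝ)
    (hGd : IsMoorePenrose G Gd)
    (up : Fin a → ℝ) (uf : Fin b → ℝ) (yp : Fin c → ℝ) (yf : Fin e → ℝ)
    (htraj : ∃ g : Fin N → ℝ,
      Up.mulVec g = up ∧ Uf.mulVec g = uf ∧ Yp.mulVec g = yp ∧ Yf.mulVec g = yf) :
    Yf.mulVec (Gd.mulVec (Sum.elim up (Sum.elim uf yp))) = yf := by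
  obtain ⟨g, h1, h2, h3, h4⟩ := htraj
  have hGv : ∀ v, G *ᵥ v = Sum.elim (Up *ᵥ v) (Sum.elim (Uf *ᵥ v) (Yp *ᵥ v)) := by
    intro v
    subst hG
    ext i
    rcases i with i | i | i <;> rfl
  have hHv : ∀ v, H *ᵥ v = Sum.elim (G *ᵥ v) (Yf *ᵥ v) := by
    intro v
    rw [hH]
    ext i
    rcases i with i | i <;> rfl
  have hle : LinearMap.ker H.mulVecLin ≤ LinearMap.ker G.mulVecLin := by
    intro v hv
    rw [LinearMap.mem_ker, Matrix.mulVecLin_apply] at hv ⊢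
    rw [hHv] at hv
    ext i
    exact congrFun hv (Sum.inl i)
  have hker : LinearMap.ker H.mulVecLin = LinearMap.ker G.mulVecLin := by
    apply Submodule.eq_of_le_of_finrank_eq hle
    have e1 := LinearMap.finrank_range_add_finrank_ker H.mulVecLin
    have e2 := LinearMap.finrank_range_add_finrank_ker G.mulVecLin
    unfold Matrix.rank at hrank
    omega
  have hx : Sum.elim up (Sum.elim uf yp) = G *ᵥ g := by rw [hGv, h1, h2, h3]
  rw [hx]
  have hv : Gd *ᵥ (G *ᵥ g) - g ∈ LinearMap.ker G.mulVecLin := by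
    rw [LinearMap.mem_ker, Matrix.mulVecLin_apply, Matrix.mulVec_sub, Matrix.mulVec_mulVec,
      Matrix.mulVec_mulVec, hGd.1, sub_self]
  rw [← hker, LinearMap.mem_ker, Matrix.mulVecLin_apply, hHv] at hv
  have hy : Yf *ᵥ (Gd *ᵥ (G *ᵥ g) - g) = 0 := by
    ext i
    exact congrFun hv (Sum.inr i)
  rw [Matrix.mulVec_sub, sub_eq_zero, h4] at hy
  exact hy
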